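/- arXiv:1601.04532 — 2 statements merged into one kernel-verified Lean document; each statement's English description precedes it below -/
import Mathlib

section
/- Let X and Y be Polish spaces and J ⊆ X × Y a closed set. Let μ be a Borel probability measure on X and ν a Borel probability measure on Y. Then the following are equivalent: (1) μ and ν are J-related, i.e. there exists a coupling π of μ and ν with π(J) = 1; (2) ν(J⁺(A)) ≥ μ(A) for every Borel set A ⊆ X and μ(J⁻(B)) ≥ ν(B) for every Borel set B ⊆ Y. -/
/-!
This is Strassen's theorem for a closed relation. If `π` is a coupling with `π J = 1`, then for
`π`-almost every `(x, y)` the condition `x ∈ A` forces `y ∈ J⁺(A)`, and symmetrically; this gives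
both inequalities (`measure_le_of_ae_rel`).

For the converse the inequality `μ A ≤ ν (J⁺(A))` suffices, since `μ` and `ν` have equal total
mass. Partition `X` and `Y` into finitely many cells of diameter at most `ε`, up to one remainder
cell of mass at most `ε` on each side, and relate two cells when their product meets `J`. The
inequality for unions of cells is Hall's condition for the cell masses, so a fractional form of
Hall's marriage theorem (`exists_transport`) yields a transport plan between related cells. Gluing
product measures along this plan (`exists_glued_coupling`) gives a coupling that puts all but mass
`2ε` within distance `ε` of `J` (`exists_approx_coupling`). The set of all couplings is weakly
compact by Prokhorov's theorem (`isCompact_setOf_coupling`), so the integral of `min 1 (dist · J)`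
attains its minimum over it. This minimum is `0`, and as `J` is closed the minimizer lives on `J`.
-/

open MeasureTheory Set

/-! ### Fractional Hall theorem -/

lemma card_sigma_fst_eq {I : Type*} [Fintype I] [DecidableEq I] (m : I → ℕ) (i : I) :
    (Finset.univ.filter fun x : (i : I) × Fin (m i) => x.1 = i).card = m i := by
  have : (Finset.univ.filter fun x : (i : I) × Fin (m i) => x.1 = i)
      = ({i} : Finset I).sigma fun _ => Finset.univ := by
    ext x; simp
  rw [this, Finset.card_sigma]; simp

/-- A fractional transport plan supported on `R` whose row sums fall short of `a` by at most
`1 / (n + 1)` and whose column sums exceed `b` by at most `1 / (n + 1)`.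
With `N = n + 1`, each `i` is replaced by `⌊N a i⌋` copies and each `k`
by `⌈N b k⌉` copies; Hall's marriage theorem matches the copies, and `w i k` is `1 / N` times the
number of matched pairs of type `(i, k)`. -/
lemma exists_approx_transport {I K : Type*} [Fintype I] [Fintype K] (R : I → K → Prop)
    [DecidableRel R] (a : I → ℝ) (b : K → ℝ) (ha : ∀ i, 0 ≤ a i) (hb : ∀ k, 0 ≤ b k)
    (H : ∀ S : Finset I, ∑ i ∈ S, a i ≤ ∑ k with ∃ i ∈ S, R i k, b k) (n : ℕ) :
    ∃ w : I → K → ℝ, (∀ i k, 0 ≤ w i k) ∧ (∀ i k, ¬ R i k → w i k = 0) ∧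
      (∀ i, ∑ k, w i k ≤ a i) ∧ (∀ i, a i - 1 / ((n : ℝ) + 1) ≤ ∑ k, w i k) ∧
      (∀ k, ∑ i, w i k ≤ b k + 1 / ((n : ℝ) + 1)) := by
  classical
  set N : ℝ := (n : ℝ) + 1 with hN
  have hN0 : 0 < N := by positivity
  let p : I → ℕ := fun i => ⌊N * a i⌋₊
  let q : K → ℕ := fun k => ⌈N * b k⌉₊
  have hall : ∃ f : ((i : I) × Fin (p i)) → ((k : K) × Fin (q k)), Function.Injective f ∧
      ∀ x, R x.1 (f x).1 := by
    refine (Fintype.all_card_le_filter_rel_iff_exists_injective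
      (fun (x : (i : I) × Fin (p i)) (y : (k : K) × Fin (q k)) => R x.1 y.1)).1 fun A => ?_
    set S : Finset I := A.image Sigma.fst with hS
    have h1 : A.card ≤ ∑ i ∈ S, p i := by
      have : A ⊆ S.sigma fun _ => Finset.univ := by
        intro x hx
        simp only [Finset.mem_sigma, Finset.mem_univ, and_true]
        exact Finset.mem_image_of_mem _ hx
      simpa [Finset.card_sigma] using Finset.card_le_card this
    have h2 : ∑ k with ∃ i ∈ S, R i k, q k
        = (Finset.univ.filter fun y : (k : K) × Fin (q k) => ∃ x ∈ A, R x.1 y.1).card := by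
      have : (Finset.univ.filter fun y : (k : K) × Fin (q k) => ∃ x ∈ A, R x.1 y.1)
          = (Finset.univ.filter fun k => ∃ i ∈ S, R i k).sigma fun _ => Finset.univ := by
        ext y
        simp only [Finset.mem_filter, Finset.mem_univ, true_and, Finset.mem_sigma, and_true, hS,
          Finset.exists_mem_image]
      rw [this, Finset.card_sigma]; simp
    rw [← h2]
    refine h1.trans ?_
    have h3 : ((∑ i ∈ S, p i : ℕ) : ℝ) ≤ ((∑ k with ∃ i ∈ S, R i k, q k : ℕ) : ℝ) := by
      push_cast
      calc ∑ i ∈ S, (p i : ℝ) ≤ ∑ i ∈ S, N * a i :=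
            Finset.sum_le_sum fun i _ => Nat.floor_le (mul_nonneg hN0.le (ha i))
        _ = N * ∑ i ∈ S, a i := (Finset.mul_sum ..).symm
        _ ≤ N * ∑ k with ∃ i ∈ S, R i k, b k := by gcongr; exact H S
        _ = ∑ k with ∃ i ∈ S, R i k, N * b k := Finset.mul_sum ..
        _ ≤ ∑ k with ∃ i ∈ S, R i k, (q k : ℝ) := Finset.sum_le_sum fun k _ => Nat.le_ceil _
    exact_mod_cast h3
  obtain ⟨f, hf, hR⟩ := hall
  let c : I → K → ℕ := fun i k =>
    (Finset.univ.filter fun x : (i : I) × Fin (p i) => x.1 = i ∧ (f x).1 = k).card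
  have hrow : ∀ i, ∑ k, c i k = p i := by
    intro i
    rw [← card_sigma_fst_eq p i, Finset.card_eq_sum_card_fiberwise (f := fun x => (f x).1)
      (t := Finset.univ) (by simp)]
    simp only [Finset.filter_filter, c]
  have hcol : ∀ k, ∑ i, c i k ≤ q k := by
    intro k
    have h : ∑ i, c i k
        = (Finset.univ.filter fun x : (i : I) × Fin (p i) => (f x).1 = k).card := by
      rw [Finset.card_eq_sum_card_fiberwise (f := fun x => x.1) (t := Finset.univ) (by simp)]
      simp only [Finset.filter_filter, c, and_comm]
    rw [h, ← card_sigma_fst_eq q k]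
    exact Finset.card_le_card_of_injOn f (fun x hx => by simpa using hx) hf.injOn
  refine ⟨fun i k => c i k / N, fun i k => by positivity, ?_, ?_, ?_, ?_⟩
  · intro i k hik
    have : c i k = 0 := by
      simp only [c, Finset.card_eq_zero, Finset.filter_eq_empty_iff]
      rintro x - ⟨rfl, rfl⟩
      exact hik (hR x)
    simp [this]
  · intro i
    rw [← Finset.sum_div, div_le_iff₀ hN0, ← Nat.cast_sum, hrow, mul_comm]
    exact Nat.floor_le (mul_nonneg hN0.le (ha i))
  · intro i
    rw [← Finset.sum_div, le_div_iff₀ hN0, ← Nat.cast_sum, hrow, sub_mul,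
      one_div_mul_cancel hN0.ne', mul_comm]
    exact (Nat.sub_one_lt_floor _).le
  · intro k
    rw [← Finset.sum_div, div_le_iff₀ hN0, ← Nat.cast_sum, add_mul, one_div_mul_cancel hN0.ne',
      mul_comm]
    exact (Nat.cast_le.2 (hcol k)).trans (Nat.ceil_lt_add_one (mul_nonneg hN0.le (hb k))).le

/-- The finite case: a fractional Hall theorem with real weights of equal total mass, obtained
from the approximate plans by compactness of a box in `I → K → ℝ`. The column sums are a priori
only bounded by `b`; equality of the total masses turns this into an equality. -/
lemma exists_transport {I K : Type*} [Fintype I] [Fintype K] (R : I → K → Prop)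
    [DecidableRel R] (a : I → ℝ) (b : K → ℝ) (ha : ∀ i, 0 ≤ a i) (hb : ∀ k, 0 ≤ b k)
    (hab : ∑ i, a i = ∑ k, b k)
    (H : ∀ S : Finset I, ∑ i ∈ S, a i ≤ ∑ k with ∃ i ∈ S, R i k, b k) :
    ∃ w : I → K → ℝ, (∀ i k, 0 ≤ w i k) ∧ (∀ i k, ¬ R i k → w i k = 0) ∧
      (∀ i, ∑ k, w i k = a i) ∧ (∀ k, ∑ i, w i k = b k) := by
  -- `h1`, `h2` bound the row sums from above and below; `h3` bounds the column sums from above.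
  choose w h0 hR h1 h2 h3 using exists_approx_transport R a b ha hb H
  have hmem : ∀ n, w n ∈ Icc (0 : I → K → ℝ) (fun i _ => a i) := fun n =>
    ⟨fun i k => h0 n i k, fun i k =>
      (Finset.single_le_sum (fun k _ => h0 n i k) (Finset.mem_univ k)).trans (h1 n i)⟩
  obtain ⟨v, -, φ, hφ, hv⟩ := isCompact_Icc.tendsto_subseq hmem
  have hlim : ∀ i k, Filter.Tendsto (fun n => w (φ n) i k) Filter.atTop (nhds (v i k)) :=
    fun i k => tendsto_pi_nhds.1 (tendsto_pi_nhds.1 hv i) k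
  have herr : Filter.Tendsto (fun n => 1 / ((φ n : ℝ) + 1)) Filter.atTop (nhds 0) :=
    tendsto_one_div_add_atTop_nhds_zero_nat.comp hφ.tendsto_atTop
  have hrow : ∀ i, ∑ k, v i k = a i := fun i => by
    have hl := tendsto_finsetSum Finset.univ fun k _ => hlim i k
    refine le_antisymm (le_of_tendsto' hl fun n => h1 _ i) ?_
    have := le_of_tendsto_of_tendsto' (tendsto_const_nhds.sub herr) hl fun n => h2 (φ n) i
    simpa using this
  have hcol : ∀ k, ∑ i, v i k ≤ b k := fun k => by
    have hl := tendsto_finsetSum Finset.univ fun i _ => hlim i k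
    have := le_of_tendsto_of_tendsto' hl (tendsto_const_nhds.add herr) fun n => h3 (φ n) k
    simpa using this
  refine ⟨v, fun i k => ge_of_tendsto' (hlim i k) fun n => h0 _ i k, fun i k hik => ?_, hrow, ?_⟩
  · exact tendsto_nhds_unique (hlim i k) (by simp [hR _ i k hik])
  · have heq : ∑ k, ∑ i, v i k = ∑ k, b k := by
      rw [Finset.sum_comm, ← hab]; exact Finset.sum_congr rfl fun i _ => hrow i
    exact fun k => (Finset.sum_eq_sum_iff_of_le fun k _ => hcol k).1 heq k (Finset.mem_univ k)

open scoped ENNReal NNReal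

/-! ### Discretization and approximate couplings -/

/-- A finite measurable partition, encoded by its labelling map `g`, all of whose cells have
diameter at most `ε` except for the last one, which has measure at most `ε`. -/
lemma exists_small_cells {X : Type*} [MetricSpace X] [SecondCountableTopology X]
    [MeasurableSpace X] [BorelSpace X] (μ : Measure X) [IsProbabilityMeasure μ]
    {ε : ℝ} (hε : 0 < ε) :
    ∃ (n : ℕ) (g : X → Fin (n + 1)), Measurable g ∧ μ (g ⁻¹' {Fin.last n}) ≤ ENNReal.ofReal ε ∧
      ∀ x x', g x = g x' → g x ≠ Fin.last n → dist x x' ≤ ε := by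
  classical
  have : Nonempty X := nonempty_of_isProbabilityMeasure μ
  let d := TopologicalSpace.denseSeq X
  have hd : ∀ x : X, ∃ k, dist x (d k) < ε / 2 := fun x =>
    (TopologicalSpace.denseRange_denseSeq X).exists_dist_lt x (half_pos hε)
  let idx : X → ℕ := fun x => Nat.find (hd x)
  have hidx : Measurable idx := measurable_find hd fun k =>
    measurableSet_lt (measurable_id.dist measurable_const) measurable_const
  have hlim : Filter.Tendsto (fun n => μ (idx ⁻¹' Ici n)) Filter.atTop (nhds 0) := by
    have := tendsto_measure_iInter_atTop (μ := μ) (s := fun n => idx ⁻¹' Ici n)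
      (fun n => (hidx measurableSet_Ici).nullMeasurableSet)
      (fun m n hmn x hx => le_trans hmn hx) ⟨0, measure_ne_top _ _⟩
    have he : ⋂ n, idx ⁻¹' Ici n = ∅ := by
      ext x
      simp only [mem_iInter, mem_preimage, mem_Ici, mem_empty_iff_false, iff_false, not_forall]
      exact ⟨idx x + 1, by omega⟩
    rwa [he, measure_empty] at this
  obtain ⟨n, hn⟩ := (hlim.eventually_le_const (ENNReal.ofReal_pos.2 hε)).exists
  -- All indices from `n` on are merged into the last cell.
  let r : ℕ → Fin (n + 1) := fun m => ⟨min m n, by omega⟩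
  refine ⟨n, fun x => r (idx x), (measurable_of_countable r).comp hidx, ?_, ?_⟩
  · refine le_trans (measure_mono ?_) hn
    intro x hx
    have : min (idx x) n = n := congrArg Fin.val (show r (idx x) = Fin.last n from hx)
    exact show n ≤ idx x by omega
  · intro x x' h hne
    have h1 : min (idx x) n = min (idx x') n := congrArg Fin.val h
    have h2 : min (idx x) n ≠ n := fun h => hne (Fin.ext h)
    have h3 : idx x = idx x' := by omega
    have e1 : dist x (d (idx x)) < ε / 2 := Nat.find_spec (hd x)
    have e2 : dist x' (d (idx x)) < ε / 2 := h3 ▸ Nat.find_spec (hd x')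
    linarith [dist_triangle_right x x' (d (idx x))]

lemma sum_measure_fiber {X I : Type*} [Fintype I] [MeasurableSpace X] [MeasurableSpace I]
    [MeasurableSingletonClass I] (μ : Measure X) {g : X → I} (hg : Measurable g) (s : Set X) :
    ∑ i, μ (g ⁻¹' {i} ∩ s) = μ s := by
  classical
  have := sum_measure_preimage_singleton (μ := μ.restrict s) (f := g) Finset.univ
    fun i _ => hg (measurableSet_singleton i)
  simp only [Finset.coe_univ, preimage_univ, Measure.restrict_apply_univ] at this
  rw [← this]
  exact Finset.sum_congr rfl fun i _ =>
    (Measure.restrict_apply (hg (measurableSet_singleton i))).symm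

/-- A transport plan `w` between the cell masses of two finite partitions lifts to the coupling
`∑ w i k • μ[|cell i] ⊗ ν[|cell k]`, which charges only the pairs of cells with positive weight. -/
lemma exists_glued_coupling {X Y I K : Type*} [Fintype I] [Fintype K]
    [MeasurableSpace X] [MeasurableSpace Y]
    [MeasurableSpace I] [MeasurableSingletonClass I]
    [MeasurableSpace K] [MeasurableSingletonClass K]
    (μ : Measure X) (ν : Measure Y) [IsProbabilityMeasure μ] [IsProbabilityMeasure ν]
    {g : X → I} {h : Y → K} (hg : Measurable g) (hh : Measurable h)
    (w : I → K → ℝ≥0∞) (hrow : ∀ i, ∑ k, w i k = μ (g ⁻¹' {i}))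
    (hcol : ∀ k, ∑ i, w i k = ν (h ⁻¹' {k})) :
    ∃ π : Measure (X × Y), π.map Prod.fst = μ ∧ π.map Prod.snd = ν ∧
      ∀ᵐ z ∂π, w (g z.1) (h z.2) ≠ 0 := by
  have hgm : ∀ i, MeasurableSet (g ⁻¹' {i}) := fun i => hg (measurableSet_singleton i)
  have hhm : ∀ k, MeasurableSet (h ⁻¹' {k}) := fun k => hh (measurableSet_singleton k)
  let P : I → Measure X := fun i => ProbabilityTheory.cond μ (g ⁻¹' {i})
  let Q : K → Measure Y := fun k => ProbabilityTheory.cond ν (h ⁻¹' {k})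
  -- Conditioning on a null cell gives the zero measure, but such cells carry no weight.
  have hwμ : ∀ i k, w i k ≠ 0 → μ (g ⁻¹' {i}) ≠ 0 := fun i k hw h0 =>
    hw ((Finset.sum_eq_zero_iff.1 ((hrow i).trans h0)) k (Finset.mem_univ k))
  have hwν : ∀ i k, w i k ≠ 0 → ν (h ⁻¹' {k}) ≠ 0 := fun i k hw h0 =>
    hw ((Finset.sum_eq_zero_iff.1 ((hcol k).trans h0)) i (Finset.mem_univ i))
  have hP : ∀ i k, w i k * P i univ = w i k := fun i k => by
    by_cases hw : w i k = 0
    · simp [hw]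
    · have := ProbabilityTheory.cond_isProbabilityMeasure (hwμ i k hw)
      simp [P]
  have hQ : ∀ i k, w i k * Q k univ = w i k := fun i k => by
    by_cases hw : w i k = 0
    · simp [hw]
    · have := ProbabilityTheory.cond_isProbabilityMeasure (hwν i k hw)
      simp [Q]
  refine ⟨∑ i, ∑ k, w i k • (P i).prod (Q k), ?_, ?_, ?_⟩
  · ext s hs
    rw [Measure.map_apply measurable_fst hs, ← prod_univ]
    simp only [Measure.coe_finsetSum, Finset.sum_apply, Measure.smul_apply, Measure.prod_prod,
      smul_eq_mul]
    rw [← sum_measure_fiber μ hg s]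
    refine Finset.sum_congr rfl fun i _ => ?_
    calc ∑ k, w i k * (P i s * Q k univ) = ∑ k, w i k * P i s :=
          Finset.sum_congr rfl fun k _ => by rw [mul_comm (P i s), ← mul_assoc, hQ]
      _ = P i s * μ (g ⁻¹' {i}) := by rw [← Finset.sum_mul, hrow, mul_comm]
      _ = _ := ProbabilityTheory.cond_mul_eq_inter (hgm i) s μ
  · ext s hs
    rw [Measure.map_apply measurable_snd hs, ← univ_prod, Finset.sum_comm]
    simp only [Measure.coe_finsetSum, Finset.sum_apply, Measure.smul_apply, Measure.prod_prod,
      smul_eq_mul]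
    rw [← sum_measure_fiber ν hh s]
    refine Finset.sum_congr rfl fun k _ => ?_
    calc ∑ i, w i k * (P i univ * Q k s) = ∑ i, w i k * Q k s :=
          Finset.sum_congr rfl fun i _ => by rw [← mul_assoc, hP]
      _ = Q k s * ν (h ⁻¹' {k}) := by rw [← Finset.sum_mul, hcol, mul_comm]
      _ = _ := ProbabilityTheory.cond_mul_eq_inter (hhm k) s ν
  · rw [ae_iff]
    simp only [Measure.coe_finsetSum, Finset.sum_apply, Measure.smul_apply, smul_eq_mul]
    refine Finset.sum_eq_zero fun i _ => Finset.sum_eq_zero fun k _ => ?_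
    by_cases hw : w i k = 0
    · simp [hw]
    have hA : P i (g ⁻¹' {i})ᶜ = 0 := by
      simp [P, ProbabilityTheory.cond_apply (hgm i)]
    have hB : Q k (h ⁻¹' {k})ᶜ = 0 := by
      simp [Q, ProbabilityTheory.cond_apply (hhm k)]
    have hsub : {z : X × Y | ¬ w (g z.1) (h z.2) ≠ 0}
        ⊆ ((g ⁻¹' {i})ᶜ ×ˢ univ) ∪ (univ ×ˢ (h ⁻¹' {k})ᶜ) := by
      rintro ⟨x, y⟩ hz
      by_contra hcon
      simp only [mem_union, mem_prod, mem_compl_iff, mem_preimage, mem_singleton_iff, mem_univ,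
        and_true, true_and, not_or, not_not] at hcon
      simp only [mem_ofPred_eq, hcon.1, hcon.2] at hz
      exact hz hw
    rw [measure_mono_null hsub (measure_union_null (by simp [Measure.prod_prod, hA])
      (by simp [Measure.prod_prod, hB])), mul_zero]

/-- A coupling concentrated on the `ε`-neighbourhood of `J` up to mass `2ε`. Two cells are related
when their product meets `J`; the inequality for `A` a union of cells is exactly Hall's condition,
and the product of two related cells of diameter at most `ε` lies within `ε` of `J`. -/
lemma exists_approx_coupling {X Y : Type*} [MetricSpace X] [SecondCountableTopology X]
    [MeasurableSpace X] [BorelSpace X] [MetricSpace Y] [SecondCountableTopology Y]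
    [MeasurableSpace Y] [BorelSpace Y] (J : Set (X × Y))
    (μ : Measure X) (ν : Measure Y) [IsProbabilityMeasure μ] [IsProbabilityMeasure ν]
    (H : ∀ A : Set X, MeasurableSet A → μ A ≤ ν {y | ∃ x ∈ A, (x, y) ∈ J})
    {ε : ℝ} (hε : 0 < ε) :
    ∃ π : Measure (X × Y), π.map Prod.fst = μ ∧ π.map Prod.snd = ν ∧
      π {z | ¬ ∃ z' ∈ J, dist z z' ≤ ε} ≤ 2 * ENNReal.ofReal ε := by
  classical
  obtain ⟨m, g, hg, hgε, hgd⟩ := exists_small_cells μ hε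
  obtain ⟨n, h, hh, hhε, hhd⟩ := exists_small_cells ν hε
  let R : Fin (m + 1) → Fin (n + 1) → Prop := fun i k => ∃ z ∈ J, g z.1 = i ∧ h z.2 = k
  have hsumμ : ∀ S : Finset (Fin (m + 1)), ∑ i ∈ S, μ.real (g ⁻¹' {i}) = μ.real (g ⁻¹' S) :=
    fun S => sum_measureReal_preimage_singleton S fun i _ => hg (measurableSet_singleton i)
  have hsumν : ∀ S : Finset (Fin (n + 1)), ∑ k ∈ S, ν.real (h ⁻¹' {k}) = ν.real (h ⁻¹' S) :=
    fun S => sum_measureReal_preimage_singleton S fun i _ => hh (measurableSet_singleton i)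
  obtain ⟨w, hw0, hwR, hrow, hcol⟩ := exists_transport R (fun i => μ.real (g ⁻¹' {i}))
    (fun k => ν.real (h ⁻¹' {k})) (fun _ => measureReal_nonneg) (fun _ => measureReal_nonneg)
    (by rw [hsumμ, hsumν]; simp) (fun S => by
      rw [hsumμ, hsumν]
      refine ENNReal.toReal_mono (measure_ne_top _ _)
        ((H _ (hg S.measurableSet)).trans (measure_mono ?_))
      rintro y ⟨x, hx, hxy⟩
      simp only [mem_preimage, Finset.mem_coe, Finset.mem_filter, Finset.mem_univ, true_and]
      exact ⟨g x, hx, (x, y), hxy, rfl, rfl⟩)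
  obtain ⟨π, hπ1, hπ2, hπR⟩ := exists_glued_coupling μ ν hg hh (fun i k => ENNReal.ofReal (w i k))
    (fun i => by
      rw [← ENNReal.ofReal_sum_of_nonneg fun k _ => hw0 i k, hrow, ofReal_measureReal])
    (fun k => by
      rw [← ENNReal.ofReal_sum_of_nonneg fun i _ => hw0 i k, hcol, ofReal_measureReal])
  refine ⟨π, hπ1, hπ2, ?_⟩
  have e1 : π (Prod.fst ⁻¹' (g ⁻¹' {Fin.last m})) ≤ ENNReal.ofReal ε := by
    rwa [← Measure.map_apply measurable_fst (hg (measurableSet_singleton _)), hπ1]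
  have e2 : π (Prod.snd ⁻¹' (h ⁻¹' {Fin.last n})) ≤ ENNReal.ofReal ε := by
    rwa [← Measure.map_apply measurable_snd (hh (measurableSet_singleton _)), hπ2]
  rw [two_mul]
  refine le_trans (measure_mono_ae ?_) ((measure_union_le _ _).trans (add_le_add e1 e2))
  filter_upwards [hπR] with z hz hzbad
  by_contra hcon
  have hcon' : ¬ (g z.1 = Fin.last m ∨ h z.2 = Fin.last n) := hcon
  push Not at hcon'
  have hRz : R (g z.1) (h z.2) := by
    by_contra hnR
    exact hz (by simp [hwR _ _ hnR])
  obtain ⟨z', hz', hz1, hz2⟩ := hRz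
  exact hzbad ⟨z', hz', max_le (hgd _ _ hz1.symm hcon'.1) (hhd _ _ hz2.symm hcon'.2)⟩

/-! ### Passage to the limit -/

/-- Couplings form a weakly closed set, which is tight because the marginals are, so Prokhorov's
theorem applies. -/
lemma isCompact_setOf_coupling {X Y : Type*}
    [TopologicalSpace X] [PolishSpace X] [MeasurableSpace X] [BorelSpace X]
    [TopologicalSpace Y] [PolishSpace Y] [MeasurableSpace Y] [BorelSpace Y]
    (μ : Measure X) (ν : Measure Y) [IsProbabilityMeasure μ] [IsProbabilityMeasure ν] :
    IsCompact {π : ProbabilityMeasure (X × Y) |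
      (π : Measure (X × Y)).map Prod.fst = μ ∧ (π : Measure (X × Y)).map Prod.snd = ν} := by
  let _ := TopologicalSpace.upgradeIsCompletelyMetrizable X
  let _ := TopologicalSpace.upgradeIsCompletelyMetrizable Y
  set C := {π : ProbabilityMeasure (X × Y) |
      (π : Measure (X × Y)).map Prod.fst = μ ∧ (π : Measure (X × Y)).map Prod.snd = ν} with hC
  have hclosed : IsClosed C := by
    let μ' : ProbabilityMeasure X := ⟨μ, inferInstance⟩
    let ν' : ProbabilityMeasure Y := ⟨ν, inferInstance⟩
    have h1 := (isClosed_singleton (x := μ')).preimage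
      (ProbabilityMeasure.continuous_map (Ω := X × Y) continuous_fst)
    have h2 := (isClosed_singleton (x := ν')).preimage
      (ProbabilityMeasure.continuous_map (Ω := X × Y) continuous_snd)
    convert h1.inter h2 using 1
    ext π
    simp only [hC, mem_ofPred_eq, mem_inter_iff, mem_preimage, mem_singleton_iff]
    have e1 : π.map continuous_fst.measurable.aemeasurable = μ'
        ↔ (π : Measure (X × Y)).map Prod.fst = μ := by
      rw [← ProbabilityMeasure.toMeasure_map]; exact Subtype.ext_iff
    have e2 : π.map continuous_snd.measurable.aemeasurable = ν'
        ↔ (π : Measure (X × Y)).map Prod.snd = ν := by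
      rw [← ProbabilityMeasure.toMeasure_map]; exact Subtype.ext_iff
    rw [e1, e2]
  have htight : IsTightMeasureSet {((π : ProbabilityMeasure (X × Y)) : Measure (X × Y)) | π ∈ C} := by
    refine IsTightMeasureSet.prodMk
      ((isTightMeasureSet_singleton (μ := μ)).subset ?_)
      ((isTightMeasureSet_singleton (μ := ν)).subset ?_)
    · rintro _ ⟨_, ⟨π, hπ, rfl⟩, rfl⟩
      exact hπ.1
    · rintro _ ⟨_, ⟨π, hπ, rfl⟩, rfl⟩
      exact hπ.2
  simpa [hclosed.closure_eq] using isCompact_closure_of_isTightMeasureSet htight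

/-- The distance to `J` capped at `1`, as a bounded continuous function. For `J = ∅` it is `0`,
the junk value of `Metric.infNndist`. -/
noncomputable def cappedDist {Z : Type*} [PseudoMetricSpace Z] (J : Set Z) :
    BoundedContinuousFunction Z ℝ≥0 :=
  BoundedContinuousFunction.mkOfBound
    ⟨fun z => min 1 (Metric.infNndist z J),
      continuous_const.min (Metric.continuous_infNndist_pt J)⟩ 1 fun z z' => by
    refine (NNReal.dist_eq _ _).trans_le (abs_le.2 ⟨?_, ?_⟩) <;>
    · have h1 : ((min 1 (Metric.infNndist z J) : ℝ≥0) : ℝ) ≤ 1 := by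
        exact_mod_cast min_le_left _ _
      have h2 : ((min 1 (Metric.infNndist z' J) : ℝ≥0) : ℝ) ≤ 1 := by
        exact_mod_cast min_le_left _ _
      have h3 := NNReal.coe_nonneg (min 1 (Metric.infNndist z J))
      have h4 := NNReal.coe_nonneg (min 1 (Metric.infNndist z' J))
      simp only [ContinuousMap.coe_mk] at *
      linarith

lemma cappedDist_apply {Z : Type*} [PseudoMetricSpace Z] (J : Set Z) (z : Z) :
    cappedDist J z = min 1 (Metric.infNndist z J) := rfl

lemma lintegral_cappedDist_le {Z : Type*} [PseudoMetricSpace Z] [MeasurableSpace Z]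
    [BorelSpace Z] (J : Set Z) (π : Measure Z) [IsProbabilityMeasure π] {ε : ℝ} (hε : 0 < ε)
    (h : π {z | ¬ ∃ z' ∈ J, dist z z' ≤ ε} ≤ 2 * ENNReal.ofReal ε) :
    ∫⁻ z, cappedDist J z ∂π ≤ 3 * ENNReal.ofReal ε := by
  set B := toMeasurable π {z | ¬ ∃ z' ∈ J, dist z z' ≤ ε} with hB
  have hle : ∀ z, (cappedDist J z : ℝ≥0∞) ≤ ENNReal.ofReal ε + B.indicator 1 z := by
    intro z
    by_cases hz : z ∈ B
    · rw [indicator_of_mem hz]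
      refine le_trans ?_ le_add_self
      exact ENNReal.coe_le_one_iff.2 (min_le_left _ _)
    · rw [indicator_of_notMem hz, add_zero]
      have hz' : ∃ z' ∈ J, dist z z' ≤ ε := by
        by_contra hcon
        exact hz (subset_toMeasurable _ _ hcon)
      obtain ⟨z', hz'J, hd⟩ := hz'
      rw [ENNReal.ofReal, ENNReal.coe_le_coe]
      refine (min_le_right _ _).trans ?_
      rw [← NNReal.coe_le_coe, Real.coe_toNNReal _ hε.le]
      exact (Metric.infDist_le_dist_of_mem hz'J).trans hd
  calc ∫⁻ z, cappedDist J z ∂π ≤ ∫⁻ z, (ENNReal.ofReal ε + B.indicator 1 z) ∂π :=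
        lintegral_mono hle
    _ = ENNReal.ofReal ε + π B := by
        rw [lintegral_add_left measurable_const, lintegral_indicator_one (measurableSet_toMeasurable ..),
          lintegral_const, measure_univ, mul_one]
    _ ≤ ENNReal.ofReal ε + 2 * ENNReal.ofReal ε := by
        rw [hB, measure_toMeasurable]; gcongr
    _ = 3 * ENNReal.ofReal ε := by ring

/-- The hard direction. By compactness, some coupling minimizes `∫ cappedDist J`; the approximate
couplings show that the minimum is `0`, so the minimizer is concentrated on the closed set `J`. -/
lemma exists_coupling_of_le {X Y : Type*}
    [TopologicalSpace X] [PolishSpace X] [MeasurableSpace X] [BorelSpace X]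
    [TopologicalSpace Y] [PolishSpace Y] [MeasurableSpace Y] [BorelSpace Y]
    (J : Set (X × Y)) (hJ : IsClosed J)
    (μ : Measure X) (ν : Measure Y) [IsProbabilityMeasure μ] [IsProbabilityMeasure ν]
    (H : ∀ A : Set X, MeasurableSet A → μ A ≤ ν {y | ∃ x ∈ A, (x, y) ∈ J}) :
    ∃ π : Measure (X × Y), IsProbabilityMeasure π ∧
        π.map Prod.fst = μ ∧ π.map Prod.snd = ν ∧ π J = 1 := by
  have hcpt := isCompact_setOf_coupling μ ν
  let _ := TopologicalSpace.upgradeIsCompletelyMetrizable X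
  let _ := TopologicalSpace.upgradeIsCompletelyMetrizable Y
  -- Needed because `infNndist` to the empty set is `0`.
  have hJne : J.Nonempty := by
    by_contra hcon
    have := H univ MeasurableSet.univ
    simp [not_nonempty_iff_eq_empty.1 hcon] at this
  have happ : ∀ ε : ℝ, 0 < ε → ∃ π : ProbabilityMeasure (X × Y),
      ((π : Measure (X × Y)).map Prod.fst = μ ∧ (π : Measure (X × Y)).map Prod.snd = ν) ∧
      ∫⁻ z, cappedDist J z ∂(π : Measure (X × Y)) ≤ 3 * ENNReal.ofReal ε := by
    intro ε hε
    obtain ⟨π, h1, h2, h3⟩ := exists_approx_coupling J μ ν H hε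
    have : IsProbabilityMeasure (π.map Prod.fst) := by rw [h1]; infer_instance
    have hπ : IsProbabilityMeasure π :=
      Measure.isProbabilityMeasure_of_map Prod.fst
    exact ⟨⟨π, hπ⟩, ⟨h1, h2⟩, lintegral_cappedDist_le J π hε h3⟩
  obtain ⟨π₁, hπ₁, -⟩ := happ 1 one_pos
  obtain ⟨π, hπ, hmin⟩ := hcpt.exists_isMinOn ⟨π₁, hπ₁⟩
    (ProbabilityMeasure.continuous_testAgainstNN_eval (cappedDist J)).continuousOn
  have hzero : ∫⁻ z, cappedDist J z ∂(π : Measure (X × Y)) = 0 := by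
    have hle : ∀ ε : ℝ, 0 < ε →
        ∫⁻ z, cappedDist J z ∂(π : Measure (X × Y)) ≤ 3 * ENNReal.ofReal ε := by
      intro ε hε
      obtain ⟨ρ, hρ, hρε⟩ := happ ε hε
      have h1 : π.toFiniteMeasure.testAgainstNN (cappedDist J)
          ≤ ρ.toFiniteMeasure.testAgainstNN (cappedDist J) := hmin hρ
      rw [← ENNReal.coe_le_coe, FiniteMeasure.testAgainstNN_coe_eq,
        FiniteMeasure.testAgainstNN_coe_eq] at h1
      exact h1.trans hρε
    have hlim : Filter.Tendsto (fun ε : ℝ => 3 * ENNReal.ofReal ε)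
        (nhdsWithin 0 (Ioi 0)) (nhds 0) := by
      have : Continuous fun ε : ℝ => 3 * ENNReal.ofReal ε :=
        (ENNReal.continuous_const_mul (by simp)).comp ENNReal.continuous_ofReal
      simpa using (this.tendsto 0).mono_left nhdsWithin_le_nhds
    exact le_antisymm (ge_of_tendsto hlim (eventually_mem_nhdsWithin.mono hle)) bot_le
  refine ⟨π, inferInstance, hπ.1, hπ.2, ?_⟩
  rw [lintegral_eq_zero_iff (BoundedContinuousFunction.measurable_coe_ennreal_comp _)] at hzero
  refine (prob_compl_eq_zero_iff hJ.measurableSet).1 ?_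
  change ∀ᵐ z ∂(π : Measure (X × Y)), z ∈ J
  filter_upwards [hzero] with z hz
  have hz0 : min 1 (Metric.infNndist z J) = 0 := by
    simpa [cappedDist_apply] using hz
  have hz1 : Metric.infNndist z J = 0 := by
    rcases min_choice 1 (Metric.infNndist z J) with h | h
    · rw [h] at hz0; exact absurd hz0 one_ne_zero
    · rwa [h] at hz0
  rw [hJ.mem_iff_infDist_zero hJne, ← Metric.coe_infNndist, hz1, NNReal.coe_zero]

/-! ### Equivalence with the measure inequalities -/

/-- The easy direction, stated for two maps out of a common space so that it serves both
inequalities. The set on the right need not be measurable. -/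
lemma measure_le_of_ae_rel {Z X Y : Type*} [MeasurableSpace Z] [MeasurableSpace X]
    [MeasurableSpace Y] (π : Measure Z) {p : Z → X} {q : Z → Y}
    (hp : Measurable p) (hq : Measurable q) {R : X → Y → Prop}
    (hR : ∀ᵐ z ∂π, R (p z) (q z)) {A : Set X} (hA : MeasurableSet A) :
    π.map p A ≤ π.map q {y | ∃ x ∈ A, R x y} := by
  rw [Measure.map_apply hp hA]
  refine le_trans (measure_mono_ae ?_) (Measure.le_map_apply hq.aemeasurable _)
  filter_upwards [hR] with z hz hzA
  exact ⟨p z, hzA, hz⟩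

/-- **Theorem (Suhr, Thm. 2 (P2)).** Let `X`, `Y` be Polish spaces and `J ⊆ X × Y` closed.
Probability measures `μ` on `X` and `ν` on `Y` are `J`-related (i.e. admit a coupling `π`
with `π J = 1`) iff `ν(J⁺(A)) ≥ μ(A)` for all Borel `A ⊆ X` and `μ(J⁻(B)) ≥ ν(B)`
for all Borel `B ⊆ Y`. -/
theorem J_related_iff_measure_inequalities
    {X Y : Type*}
    [TopologicalSpace X] [PolishSpace X] [MeasurableSpace X] [BorelSpace X]
    [TopologicalSpace Y] [PolishSpace Y] [MeasurableSpace Y] [BorelSpace Y]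
    (J : Set (X × Y)) (hJ : IsClosed J)
    (μ : Measure X) (ν : Measure Y)
    [IsProbabilityMeasure μ] [IsProbabilityMeasure ν] :
    (∃ π : Measure (X × Y), IsProbabilityMeasure π ∧
        π.map Prod.fst = μ ∧ π.map Prod.snd = ν ∧ π J = 1) ↔
      ((∀ A : Set X, MeasurableSet A → μ A ≤ ν {y | ∃ x ∈ A, (x, y) ∈ J}) ∧
       (∀ B : Set Y, MeasurableSet B → ν B ≤ μ {x | ∃ y ∈ B, (x, y) ∈ J})) := by
  constructor
  · rintro ⟨π, hπ, rfl, rfl, hπJ⟩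
    have hae : ∀ᵐ z ∂π, (z.1, z.2) ∈ J := (prob_compl_eq_zero_iff hJ.measurableSet).2 hπJ
    exact ⟨fun A hA => measure_le_of_ae_rel π measurable_fst measurable_snd
        (R := fun x y => (x, y) ∈ J) hae hA,
      fun B hB => measure_le_of_ae_rel π measurable_snd measurable_fst
        (R := fun y x => (x, y) ∈ J) hae hB⟩
  · rintro ⟨H, -⟩
    exact exists_coupling_of_le J hJ μ ν H
end

section
/- Let X and Y be Polish spaces and J ⊆ X × Y a closed set. Let (μ_n) and (ν_n) be sequences of Borel probability measures on X and Y respectively such that μ_n converges weakly to a probability measure μ and ν_n converges weakly to a probability measure ν, and such that for each n the measures μ_n and ν_n are J-related. Then μ and ν are J-related. -/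
open MeasureTheory Set Filter

/-!
By Prokhorov's theorem, the two convergent sequences of marginals are tight, and a set of measures
on a product is tight as soon as both sets of marginals are. Hence the couplings `πₙ` lie in a
compact set of probability measures on `X × Y` and converge to some `π` along an ultrafilter finer
than `atTop`. Marginals depend continuously on the measure and limits of probability measures are
unique, so `π` couples `μ` and `ν`. The portmanteau theorem for the closed set `J` gives
`π J ≥ limsup πₙ J = 1`.
-/

open scoped Topology

/-- The terms of a weakly convergent sequence of probability measures on a Polish space form a
tight set: together with the limit they form a compact set. -/
lemma isTightMeasureSet_range_of_tendsto
    {X : Type*} [TopologicalSpace X] [PolishSpace X] [MeasurableSpace X] [BorelSpace X]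
    {μseq : ℕ → ProbabilityMeasure X} {μ : ProbabilityMeasure X}
    (hμ : Tendsto μseq atTop (𝓝 μ)) :
    IsTightMeasureSet (range fun k ↦ (μseq k : Measure X)) := by
  let _ := TopologicalSpace.upgradeIsCompletelyMetrizable X
  have hc : IsCompact (closure (range μseq)) :=
    hμ.isCompact_insert_range.closure_of_subset (subset_insert _ _)
  refine (isTightMeasureSet_of_isCompact_closure hc).subset ?_
  rintro _ ⟨k, rfl⟩
  exact ⟨μseq k, mem_range_self k, rfl⟩


/-- **(Limit step in the proof of Suhr, Theorem 2.)** Let `X`, `Y` be Polish spaces and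
`J ⊆ X × Y` closed. If `μₙ → μ` and `νₙ → ν` weakly and each pair `(μₙ, νₙ)` is
`J`-related, then `μ` and `ν` are `J`-related. -/
theorem J_related_of_weak_limits
    {X Y : Type*}
    [TopologicalSpace X] [PolishSpace X] [MeasurableSpace X] [BorelSpace X]
    [TopologicalSpace Y] [PolishSpace Y] [MeasurableSpace Y] [BorelSpace Y]
    (J : Set (X × Y)) (hJ : IsClosed J)
    (μseq : ℕ → ProbabilityMeasure X) (νseq : ℕ → ProbabilityMeasure Y)
    (μ : ProbabilityMeasure X) (ν : ProbabilityMeasure Y)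
    (hμ : Tendsto μseq atTop (nhds μ)) (hν : Tendsto νseq atTop (nhds ν))
    (hrel : ∀ k, ∃ π : Measure (X × Y), IsProbabilityMeasure π ∧
      π.map Prod.fst = (μseq k : Measure X) ∧
      π.map Prod.snd = (νseq k : Measure Y) ∧ π J = 1) :
    ∃ π : Measure (X × Y), IsProbabilityMeasure π ∧
      π.map Prod.fst = (μ : Measure X) ∧ π.map Prod.snd = (ν : Measure Y) ∧ π J = 1 := by
  choose π hπ hfst hsnd hπJ using hrel
  have htight : IsTightMeasureSet (range π) := by
    apply IsTightMeasureSet.prodMk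
    · rw [← range_comp]
      convert isTightMeasureSet_range_of_tendsto hμ using 2
      ext1 k
      exact hfst k
    · rw [← range_comp]
      convert isTightMeasureSet_range_of_tendsto hν using 2
      ext1 k
      exact hsnd k
  let P : ℕ → ProbabilityMeasure (X × Y) := fun k ↦ ⟨π k, hπ k⟩
  have hcomp : IsCompact (closure (range P)) := by
    refine isCompact_closure_of_isTightMeasureSet (htight.subset ?_)
    rintro _ ⟨_, ⟨k, rfl⟩, rfl⟩
    exact ⟨k, rfl⟩
  let L : Ultrafilter ℕ := Ultrafilter.of atTop
  have hL : (L : Filter ℕ) ≤ atTop := Ultrafilter.of_le atTop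
  obtain ⟨Q, -, hQ⟩ := hcomp.ultrafilter_le_nhds (L.map P) <| by
    rw [le_principal_iff]
    exact mem_of_superset (range_mem_map (m := P)) subset_closure
  replace hQ : Tendsto P L (𝓝 Q) := hQ
  refine ⟨Q, inferInstance, ?_, ?_, le_antisymm prob_le_one ?_⟩
  · have h := ProbabilityMeasure.tendsto_map_of_tendsto_of_continuous _ _ hQ continuous_fst
    have h' : (fun k ↦ (P k).map continuous_fst.measurable.aemeasurable) = μseq :=
      funext fun k ↦ Subtype.ext (hfst k)
    rw [h'] at h
    exact congrArg ProbabilityMeasure.toMeasure (tendsto_nhds_unique h (hμ.mono_left hL))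
  · have h := ProbabilityMeasure.tendsto_map_of_tendsto_of_continuous _ _ hQ continuous_snd
    have h' : (fun k ↦ (P k).map continuous_snd.measurable.aemeasurable) = νseq :=
      funext fun k ↦ Subtype.ext (hsnd k)
    rw [h'] at h
    exact congrArg ProbabilityMeasure.toMeasure (tendsto_nhds_unique h (hν.mono_left hL))
  · -- `HasOuterApproxClosed (X × Y)` is found through a metric on the product.
    let _ := TopologicalSpace.upgradeIsCompletelyMetrizable (X × Y)
    have h := ProbabilityMeasure.limsup_measure_closed_le_of_tendsto hQ hJ
    have h' : (fun k ↦ (P k : Measure (X × Y)) J) = fun _ ↦ 1 := funext hπJ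
    rwa [h', limsup_const] at h
end
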